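/- arXiv:1302.0762 — 3 statements merged into one kernel-verified Lean document; each statement's English description precedes it below -/
import Mathlib

section
/- Let V be a finite-dimensional vector space over a field K and let f : V → V be a linear endomorphism admitting an additive Jordan–Chevalley decomposition f = s + n, where s : V → V is a semisimple endomorphism, n : V → V is a nilpotent endomorphism, and s and n commute. Then for every v ∈ V there exists k ∈ ℕ with (f − id)^k v = 0 if and only if s v = v. -/
/-!
On the generalized eigenspace of `f` for the eigenvalue `1`, which `s` preserves, both `f - 1` and
`n` are nilpotent and they commute, so `s - 1 = (f - 1) - n` is nilpotent there; being semisimple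
as well, it vanishes. Mathlib has this as
`Module.End.apply_eq_of_mem_of_comm_of_isFinitelySemisimple_of_isNil`.
Conversely, `n` preserves the fixed space of `s`, and `f - 1` agrees with `n` there, so a power of
`f - 1` kills every fixed vector of `s`.
-/

/-- Let `V` be a finite-dimensional vector space over a field `K` and let
`f : V → V` be a linear endomorphism admitting an additive Jordan–Chevalley decomposition
`f = s + n`, with `s` semisimple, `n` nilpotent and `s`, `n` commuting. Then for every `v ∈ V`
there exists `k ∈ ℕ` with `(f - id)^k v = 0` if and only if `s v = v`. -/
theorem generalized_one_eigenspace_additive_jordan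
    {K V : Type*} [Field K] [AddCommGroup V] [Module K V] [FiniteDimensional K V]
    (f s n : Module.End K V) (hf : f = s + n)
    (hs : s.IsSemisimple) (hn : IsNilpotent n) (hsn : Commute s n) :
    ∀ v : V, (∃ k : ℕ, ((f - 1) ^ k) v = 0) ↔ s v = v := by
  intro v
  constructor
  · intro h
    have hsf : Commute f s := by
      rw [hf]
      exact (Commute.refl s).add_left hsn.symm
    have hnil : IsNilpotent (f - s) := by
      rwa [hf, add_sub_cancel_left]
    have hv : v ∈ f.maxGenEigenspace 1 := by
      rwa [Module.End.mem_maxGenEigenspace, one_smul]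
    simpa using Module.End.apply_eq_of_mem_of_comm_of_isFinitelySemisimple_of_isNil
      hv hsf hs.isFinitelySemisimple hnil
  · intro hv
    have key (k : ℕ) : ((f - 1) ^ k) v = (n ^ k) v := by
      induction k with
      | zero => simp
      | succ k ih =>
        have hfix : s ((n ^ k) v) = (n ^ k) v := by
          have := LinearMap.congr_fun (hsn.pow_right k).eq v
          simpa [Module.End.mul_apply, hv] using this
        rw [pow_succ', pow_succ', Module.End.mul_apply, Module.End.mul_apply, ih, hf]
        simp [hfix]
    obtain ⟨m, hm⟩ := hn
    exact ⟨m, by rw [key, hm, LinearMap.zero_apply]⟩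
end

section
/- Let K be a field, A an (associative, unital) K-algebra, and φ : A → A a K-algebra homomorphism. Let λ, μ ∈ K. If a ∈ A satisfies (φ − λ·id)^j a = 0 for some j and b ∈ A satisfies (φ − μ·id)^k b = 0 for some k, then there exists m with (φ − λμ·id)^m (a·b) = 0. That is, the product of a generalized eigenvector of φ for the eigenvalue λ with a generalized eigenvector for the eigenvalue μ is a generalized eigenvector for the eigenvalue λμ. -/
/-!
For `N = φ - λ`, `M = φ - μ` and `T = φ - λμ`, multiplicativity of `φ` gives the twisted Leibniz
rule `T (a * b) = N a * φ b + λ • (a * M b)`. Since `φ` commutes with `M`, the element `φ b` is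
killed by the same power of `M` as `b`. So each application of `T` lowers the exponent killing one
of the two factors, and `T ^ (j + k)` kills `a * b` by induction on `j + k`.
-/

/-- The exponent `j + k` suffices for the product; it is kept as a separate variable `n` for the
induction, in which both factors vary. -/
theorem pow_apply_mul_eq_zero_of_algHom {K A : Type*} [Field K] [Ring A] [Algebra K A]
    (φ : A →ₐ[K] A) (lam mu : K) (n : ℕ) : ∀ (j k : ℕ) (a b : A), j + k = n →
    ((φ.toLinearMap - lam • (1 : Module.End K A)) ^ j) a = 0 →
    ((φ.toLinearMap - mu • (1 : Module.End K A)) ^ k) b = 0 →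
    ((φ.toLinearMap - (lam * mu) • (1 : Module.End K A)) ^ n) (a * b) = 0 := by
  induction n with
  | zero =>
    intro j k a b h ha hb
    obtain rfl : j = 0 := by omega
    have ha' : a = 0 := by simpa using ha
    simp [ha']
  | succ n ih =>
    intro j k a b h ha hb
    rcases j with _ | j
    · have ha' : a = 0 := by simpa using ha
      simp [ha']
    rcases k with _ | k
    · have hb' : b = 0 := by simpa using hb
      simp [hb']
    have leibniz : (φ.toLinearMap - (lam * mu) • (1 : Module.End K A)) (a * b) =
        (φ.toLinearMap - lam • (1 : Module.End K A)) a * φ b +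
          lam • (a * (φ.toLinearMap - mu • (1 : Module.End K A)) b) := by
      simp [sub_mul, mul_sub, smul_sub, mul_smul]
    have hφb : ((φ.toLinearMap - mu • (1 : Module.End K A)) ^ (k + 1)) (φ b) = 0 := by
      have hc : Commute ((φ.toLinearMap - mu • (1 : Module.End K A)) ^ (k + 1))
          (φ.toLinearMap : Module.End K A) :=
        ((Commute.refl (φ.toLinearMap : Module.End K A)).sub_left
          ((Commute.one_left _).smul_left mu)).pow_left _
      have := LinearMap.congr_fun hc.eq b
      simpa only [Module.End.mul_apply, hb, map_zero, AlgHom.toLinearMap_apply] using this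
    rw [pow_succ, Module.End.mul_apply] at ha hb
    rw [pow_succ, Module.End.mul_apply, leibniz, map_add, map_smul,
      ih j (k + 1) _ _ (by omega) ha hφb,
      ih (j + 1) k _ _ (by omega) (by rwa [pow_succ, Module.End.mul_apply]) hb]
    simp


/-- Let `K` be a field, `A` an associative unital `K`-algebra and `φ : A → A` a
`K`-algebra homomorphism. If `a` is a generalized eigenvector of `φ` for the eigenvalue `λ` and
`b` is one for the eigenvalue `μ`, then `a * b` is a generalized eigenvector of `φ` for the
eigenvalue `λ * μ`. -/
theorem mul_generalized_eigenvectors_of_algHom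
    {K A : Type*} [Field K] [Ring A] [Algebra K A] (φ : A →ₐ[K] A)
    (lam mu : K) (a b : A) (j k : ℕ)
    (ha : ((φ.toLinearMap - lam • (1 : Module.End K A)) ^ j) a = 0)
    (hb : ((φ.toLinearMap - mu • (1 : Module.End K A)) ^ k) b = 0) :
    ∃ m : ℕ, ((φ.toLinearMap - (lam * mu) • (1 : Module.End K A)) ^ m) (a * b) = 0 := by
  exact ⟨j + k, pow_apply_mul_eq_zero_of_algHom φ lam mu _ j k a b rfl ha hb⟩
end

section
/- Let V be a real vector space of dimension 2n with n ≥ 1, and let H ⊆ V be a subspace of dimension 2n − 1. Let F be an element of degree 2 in the exterior algebra ⋀V lying in the subalgebra ⋀H generated by H (i.e. F is in the image of ⋀²H → ⋀²V), let η ∈ H, and let α ∈ V with α ∉ H. If F^{n−1} ∧ η ≠ 0 in ⋀^{2n−1}V, then F^n = 0, (F + η ∧ α)^n = n · F^{n−1} ∧ η ∧ α, and this element of ⋀^{2n}V is nonzero. -/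
/-!
Write `x = η ∧ α`. Degree-two elements are central, and `x ∧ x = 0`, so the binomial expansion
stops after the linear term: `(F + x)^n = F^n + n F^(n-1) ∧ x` (`add_pow_of_mul_self_eq_zero`).
Since `F` comes from `⋀²H`, its power `F^n` comes from `⋀^(2n) H`, which vanishes because
`dim H < 2n` (`pow_eq_zero_of_finrank_lt`). For the nonvanishing, take a linear form `d` that
vanishes on `H` and not at `α`. Contraction with `d` kills `F^(n-1) ∧ η`, a product of vectors of
`H`, so it sends `F^(n-1) ∧ η ∧ α` to `d(α) F^(n-1) ∧ η ≠ 0`.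
-/

open ExteriorAlgebra

namespace CosymplecticAux

variable {V : Type*} [AddCommGroup V] [Module ℝ V]

lemma commute_ι {H : Submodule ℝ V} {F : ExteriorAlgebra ℝ V}
    (hF : F ∈ Submodule.map (ι ℝ) H * Submodule.map (ι ℝ) H) (v : V) :
    Commute F (ι ℝ v) := by
  induction hF using Submodule.mul_induction_on' with
  | mem_mul_mem a ha b hb =>
    obtain ⟨a, -, rfl⟩ := ha
    obtain ⟨b, -, rfl⟩ := hb
    have h1 := eq_neg_of_add_eq_zero_left (ι_add_mul_swap (R := ℝ) b v)
    have h2 := eq_neg_of_add_eq_zero_left (ι_add_mul_swap (R := ℝ) a v)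
    rw [commute_iff_eq, mul_assoc, h1, mul_neg, ← mul_assoc, h2, neg_mul, neg_neg, mul_assoc]
  | add x _ y _ hx hy => exact hx.add_left hy

lemma add_pow_of_mul_self_eq_zero {A : Type*} [Ring A] {F x : A} (h : Commute F x)
    (hx : x * x = 0) (m : ℕ) :
    (F + x) ^ (m + 1) = F ^ (m + 1) + (m + 1) • (F ^ m * x) := by
  induction m with
  | zero => simp
  | succ m ih =>
    have h1 : F ^ m * x * F = F ^ (m + 1) * x := by
      rw [mul_assoc, ← h.eq, ← mul_assoc, pow_succ]
    have h2 : F ^ m * x * x = 0 := by rw [mul_assoc, hx, mul_zero]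
    rw [pow_succ, ih, add_mul, mul_add, mul_add, smul_mul_assoc, smul_mul_assoc, h1, h2,
      ← pow_succ, succ_nsmul _ (m + 1)]
    simp only [smul_zero, add_zero]
    abel

lemma ι_mul_ι_mul_self (v w : V) : ι ℝ v * ι ℝ w * (ι ℝ v * ι ℝ w) = 0 := by
  have h := eq_neg_of_add_eq_zero_left (ι_add_mul_swap (R := ℝ) w v)
  rw [mul_assoc, ← mul_assoc (ι ℝ w), h, neg_mul, mul_neg, mul_assoc (ι ℝ v) (ι ℝ w),
    ι_sq_zero, mul_zero, mul_zero, neg_zero]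

lemma pow_eq_zero_of_finrank_lt [FiniteDimensional ℝ V] {H : Submodule ℝ V} {n : ℕ}
    (hH : Module.finrank ℝ H < 2 * n) {F : ExteriorAlgebra ℝ V}
    (hF : F ∈ Submodule.map (ι ℝ) H * Submodule.map (ι ℝ) H) : F ^ n = 0 := by
  have hlift : Submodule.map (ι ℝ) H
      = (LinearMap.range (ι ℝ : H →ₗ[ℝ] _)).map
          (ExteriorAlgebra.map H.subtype).toLinearMap := by
    rw [← LinearMap.range_comp, map_comp_ι, LinearMap.range_comp, Submodule.range_subtype]
  rw [hlift, ← Submodule.map_mul, ← pow_two] at hF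
  obtain ⟨G, hG, rfl⟩ := hF
  have hbot : (⋀[ℝ]^(2 * n) H) = ⊥ := by
    rw [← Submodule.finrank_eq_zero (R := ℝ), exteriorPower.finrank_eq,
      Nat.choose_eq_zero_of_lt hH]
  have hGn : G ^ n ∈ ⋀[ℝ]^(2 * n) H := by
    rw [exteriorPower, pow_mul]
    exact Submodule.pow_mem_pow _ hG n
  rw [hbot, Submodule.mem_bot] at hGn
  rw [AlgHom.toLinearMap_apply, ← map_pow, hGn, map_zero]

/-- If `d` vanishes on `H`, right multiplication by an element of `⋀²H` preserves the kernel of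
contraction with `d`. -/
lemma contractRight_mul_eq_zero {H : Submodule ℝ V} {d : Module.Dual ℝ V}
    (hd : ∀ h ∈ H, d h = 0) {F : ExteriorAlgebra ℝ V}
    (hF : F ∈ Submodule.map (ι ℝ) H * Submodule.map (ι ℝ) H) (y : ExteriorAlgebra ℝ V)
    (hy : CliffordAlgebra.contractRight y d = 0) :
    CliffordAlgebra.contractRight (y * F) d = 0 := by
  induction hF using Submodule.mul_induction_on' with
  | mem_mul_mem a ha b hb =>
    obtain ⟨a, ha, rfl⟩ := ha
    obtain ⟨b, hb, rfl⟩ := hb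
    rw [← mul_assoc, CliffordAlgebra.contractRight_mul_ι, CliffordAlgebra.contractRight_mul_ι,
      hd a ha, hd b hb, hy]
    simp
  | add x _ z _ hx hz => rw [mul_add, map_add, LinearMap.add_apply, hx, hz, add_zero]

lemma contractRight_pow_eq_zero {H : Submodule ℝ V} {d : Module.Dual ℝ V}
    (hd : ∀ h ∈ H, d h = 0) {F : ExteriorAlgebra ℝ V}
    (hF : F ∈ Submodule.map (ι ℝ) H * Submodule.map (ι ℝ) H) (k : ℕ) :
    CliffordAlgebra.contractRight (F ^ k) d = 0 := by
  induction k with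
  | zero => rw [pow_zero]; exact CliffordAlgebra.contractRight_one (0 : QuadraticForm ℝ V) d
  | succ k ih => rw [pow_succ]; exact contractRight_mul_eq_zero hd hF _ ih

end CosymplecticAux

/-- the linear-algebra core of Section 4 of the paper. Let `V` be a real
vector space of dimension `2n` (`n ≥ 1`) and `H ⊆ V` a subspace of dimension `2n - 1`. Let `F`
be a degree-2 element of `⋀V` lying in the subalgebra generated by `H` (i.e. in the image of
`⋀²H → ⋀²V`), let `η ∈ H` and `α ∈ V` with `α ∉ H`. If `F^(n-1) ∧ η ≠ 0`, then `F^n = 0`,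
`(F + η ∧ α)^n = n • (F^(n-1) ∧ η ∧ α)`, and this element of `⋀^(2n) V` is nonzero. -/
theorem cosymplectic_gives_nondegenerate_two_form
    {V : Type*} [AddCommGroup V] [Module ℝ V] [FiniteDimensional ℝ V]
    (n : ℕ) (hn : 1 ≤ n) (hV : Module.finrank ℝ V = 2 * n)
    (H : Submodule ℝ V) (hH : Module.finrank ℝ H = 2 * n - 1)
    (F : ExteriorAlgebra ℝ V)
    (hF : F ∈ Submodule.map (ι ℝ) H * Submodule.map (ι ℝ) H)
    (η : V) (hη : η ∈ H) (α : V) (hα : α ∉ H)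
    (hne : F ^ (n - 1) * ι ℝ η ≠ 0) :
    F ^ n = 0 ∧
    (F + ι ℝ η * ι ℝ α) ^ n = n • (F ^ (n - 1) * ι ℝ η * ι ℝ α) ∧
    n • (F ^ (n - 1) * ι ℝ η * ι ℝ α) ≠ 0 := by
  have hFn : F ^ n = 0 := CosymplecticAux.pow_eq_zero_of_finrank_lt (by omega) hF
  refine ⟨hFn, ?_, ?_⟩
  · obtain ⟨m, rfl⟩ : ∃ m, n = m + 1 := ⟨n - 1, by omega⟩
    have hc : Commute F (ι ℝ η * ι ℝ α) :=
      (CosymplecticAux.commute_ι hF η).mul_right (CosymplecticAux.commute_ι hF α)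
    rw [CosymplecticAux.add_pow_of_mul_self_eq_zero hc
      (CosymplecticAux.ι_mul_ι_mul_self η α), hFn, zero_add, Nat.add_sub_cancel, mul_assoc]
  · obtain ⟨d, hdα, hdH⟩ := Submodule.exists_le_ker_of_notMem hα
    have hd : ∀ h ∈ H, d h = 0 := fun h hh => hdH hh
    have hη0 : CliffordAlgebra.contractRight (F ^ (n - 1) * ι ℝ η) d = 0 := by
      rw [CliffordAlgebra.contractRight_mul_ι, hd η hη,
        CosymplecticAux.contractRight_pow_eq_zero hd hF]
      simp
    intro h0
    -- `n •` is turned into a real scalar, which can be cancelled.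
    rw [← Nat.cast_smul_eq_nsmul ℝ, smul_eq_zero_iff_right (by positivity)] at h0
    have h1 := CliffordAlgebra.contractRight_mul_ι (d := d) α (F ^ (n - 1) * ι ℝ η)
    rw [h0, hη0, zero_mul, sub_zero, map_zero, LinearMap.zero_apply] at h1
    exact (smul_ne_zero hdα hne) h1.symm
end
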